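/- Let G be a finitely generated metabelian group with a finite relative presentation ⟨X | R⟩_{𝒮₂} in the variety of metabelian groups, and let k be the minimum, over all abelian normal subgroups A of G whose quotient G/A is abelian, of the torsion-free rank of the finitely generated abelian group G/A. Then the relative Dehn function δ̃ of this relative presentation satisfies: δ̃(n) ≼ n² if k = 0, and δ̃(n) ≼ 2^{n^{2k}} if k > 0. -/

import Mathlib

open Function

/-- The length of the reduced word representing an element of a free group. -/
noncomputable def freeNorm {X : Type*} (w : FreeGroup X) : ℕ :=
  letI := Classical.decEq X
  w.toWord.length

/-- `w` equals a product of exactly `N` conjugates of elements of `R ∪ R⁻¹`. -/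
def AreaIs {G : Type*} [Group G] (R : Set G) (w : G) (N : ℕ) : Prop :=
  ∃ r f : Fin N → G, (∀ i, r i ∈ R ∨ (r i)⁻¹ ∈ R) ∧
    w = (List.ofFn fun i => (f i)⁻¹ * r i * f i).prod

/-- The area of `w` with respect to the relators `R` is at most `N`. -/
def AreaLe {G : Type*} [Group G] (R : Set G) (w : G) (N : ℕ) : Prop :=
  ∃ N' ≤ N, AreaIs R w N'

/-- `f ≼ g` : there is `C > 0` with `f n ≤ C * g (C * n) + C * n + C` for all `n`. -/
def Dominates (f g : ℕ → ℕ) : Prop :=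
  ∃ C : ℕ, 0 < C ∧ ∀ n, f n ≤ C * g (C * n) + C * n + C

/-- `f ≈ g` : mutual domination. -/
def DehnEquiv (f g : ℕ → ℕ) : Prop := Dominates f g ∧ Dominates g f

/-- `δ` is the Dehn function of the presentation with relator set `R`. -/
def IsDehnFunctionOf {X : Type*} (R : Set (FreeGroup X)) (δ : ℕ → ℕ) : Prop :=
  ∀ n, IsLeast {N | ∀ w ∈ Subgroup.normalClosure R, freeNorm w ≤ n → AreaLe R w N} (δ n)

/-- A group is metabelian if its derived subgroup is abelian. -/
def IsMetabelian (G : Type*) [Group G] : Prop :=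
  ∀ a b : G, a ∈ commutator G → b ∈ commutator G → a * b = b * a

instance derivedSeriesNormalInst {G : Type*} [Group G] (n : ℕ) : (derivedSeries G n).Normal :=
  derivedSeries_normal G n

/-- The free metabelian group on `X`: the free group modulo its second derived subgroup. -/
abbrev FreeMetabelian (X : Type*) := FreeGroup X ⧸ derivedSeries (FreeGroup X) 2

/-- The word length of `w` in the free metabelian group is at most `n`. -/
def mNormLe {X : Type*} (w : FreeMetabelian X) (n : ℕ) : Prop :=
  ∃ v : FreeGroup X, QuotientGroup.mk' (derivedSeries (FreeGroup X) 2) v = w ∧ freeNorm v ≤ n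

/-- `δ` is the relative Dehn function (in the variety of metabelian groups) of the
relative presentation with relator set `R`. -/
def IsRelDehnFunctionOf {X : Type*} (R : Set (FreeMetabelian X)) (δ : ℕ → ℕ) : Prop :=
  ∀ n, IsLeast {N | ∀ w ∈ Subgroup.normalClosure R, mNormLe w n → AreaLe R w N} (δ n)

/-- The paper's commutator convention: `[x, y] = x⁻¹ * y⁻¹ * x * y`. -/
def pcomm {G : Type*} [Group G] (x y : G) : G := x⁻¹ * y⁻¹ * x * y

/-- A group has torsion-free rank `k` if it has a finite-index subgroup isomorphic to `ℤ^k`. -/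
def HasTFRank (Q : Type*) [Group Q] (k : ℕ) : Prop :=
  ∃ H : Subgroup Q, H.index ≠ 0 ∧ Nonempty (H ≃* Multiplicative (Fin k → ℤ))

/-- `G ⧸ A` is abelian and has torsion-free rank `j`. -/
def QuotientRankProp {G : Type*} [Group G] (A : Subgroup G) [A.Normal] (j : ℕ) : Prop :=
  (∀ x y : G ⧸ A, x * y = y * x) ∧ HasTFRank (G ⧸ A) j

/-- The set of torsion-free ranks of quotients `G ⧸ A` by abelian normal subgroups `A`
with `G ⧸ A` abelian. -/
def abelianRankSet (G : Type*) [Group G] : Set ℕ :=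
  {j | ∃ A : Subgroup G, ∃ h : A.Normal, (∀ x y : G, x ∈ A → y ∈ A → x * y = y * x) ∧
    @QuotientRankProp G _ A h j}



namespace RD

/-- shift of a formal combination -/
noncomputable def shf {d : ℕ} {J : Type} (e : Fin d →₀ ℕ) (f : ((Fin d →₀ ℕ) × J) →₀ ℤ) :
    ((Fin d →₀ ℕ) × J) →₀ ℤ :=
  f.mapDomain (fun i => (e + i.1, i.2))

theorem shinj {d : ℕ} {J : Type} (e : Fin d →₀ ℕ) :
    Function.Injective (fun i : (Fin d →₀ ℕ) × J => (e + i.1, i.2)) := by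
  rintro ⟨a, b⟩ ⟨a', b'⟩ h
  simpa using h

/-- the l1 norm -/
def nrm {I : Type} (f : I →₀ ℤ) : ℕ := f.sum fun _ z => z.natAbs

theorem nrm_add {I : Type} (f g : I →₀ ℤ) : nrm (f + g) ≤ nrm f + nrm g := by
  classical
  unfold nrm
  rw [Finsupp.sum_of_support_subset (f + g) (s := f.support ∪ g.support) Finsupp.support_add _ (by simp),
    Finsupp.sum_of_support_subset f (s := f.support ∪ g.support) Finset.subset_union_left _ (by simp),
    Finsupp.sum_of_support_subset g (s := f.support ∪ g.support) Finset.subset_union_right _ (by simp),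
    ← Finset.sum_add_distrib]
  exact Finset.sum_le_sum fun i _ => by simpa using Int.natAbs_add_le _ _

theorem nrm_smul {I : Type} (q : ℤ) (f : I →₀ ℤ) : nrm (q • f) ≤ q.natAbs * nrm f := by
  classical
  unfold nrm
  rw [Finsupp.sum_of_support_subset (q • f) (s := f.support) Finsupp.support_smul _ (by simp),
    Finsupp.sum, Finset.mul_sum]
  exact Finset.sum_le_sum fun i _ => by simp [Int.natAbs_mul]

theorem nrm_shf {d : ℕ} {J : Type} (e : Fin d →₀ ℕ) (f : ((Fin d →₀ ℕ) × J) →₀ ℤ) :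
    nrm (shf e f) = nrm f := by
  unfold nrm shf
  exact Finsupp.sum_mapDomain_index_inj (shinj e)

theorem le_nrm {I : Type} (f : I →₀ ℤ) (i : I) : (f i).natAbs ≤ nrm f := by
  classical
  by_cases h : i ∈ f.support
  · exact Finset.single_le_sum (f := fun i => (f i).natAbs) (fun _ _ => Nat.zero_le _) h
  · simp at h; simp [h]

theorem nrm_single {I : Type} (i : I) (z : ℤ) : nrm (Finsupp.single i z) = z.natAbs := by
  simp [nrm]

/-- key for comparing -/
def key {d : ℕ} {J : Type} (i : (Fin d →₀ ℕ) × J) : DegLex (Fin d →₀ ℕ) ×ₗ J :=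
  toLex (toDegLex i.1, i.2)

theorem key_inj {d : ℕ} {J : Type} : Function.Injective (key (d := d) (J := J)) := by
  rintro ⟨a, b⟩ ⟨a', b'⟩ h
  have := congrArg ofLex h
  simp [key] at this
  ext1 <;> simp [this]

theorem key_deg {d : ℕ} {J : Type} [LinearOrder J] {i j : (Fin d →₀ ℕ) × J}
    (h : key i ≤ key j) : i.1.degree ≤ j.1.degree := by
  have : toDegLex i.1 ≤ toDegLex j.1 := by
    rcases Prod.Lex.le_iff.1 h with h | h
    · exact h.le
    · exact h.1.le
  exact Finsupp.DegLex.monotone_degree this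

theorem key_shift {d : ℕ} {J : Type} [LinearOrder J] (e : Fin d →₀ ℕ) {i j : (Fin d →₀ ℕ) × J}
    (h : key i ≤ key j) : key (e + i.1, i.2) ≤ key (e + j.1, j.2) := by
  rcases Prod.Lex.le_iff.1 h with h | h
  · refine Prod.Lex.le_iff.2 (Or.inl ?_)
    exact add_lt_add_right (α := DegLex (Fin d →₀ ℕ)) h _
  · refine Prod.Lex.le_iff.2 (Or.inr ⟨?_, h.2⟩)
    have h1 : i.1 = j.1 := h.1
    simp [key, h1]

/-- leading index -/
def Lead {d : ℕ} {J : Type} [LinearOrder J] (f : ((Fin d →₀ ℕ) × J) →₀ ℤ) (i : (Fin d →₀ ℕ) × J) :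
    Prop := f i ≠ 0 ∧ ∀ j, f j ≠ 0 → key j ≤ key i

theorem exists_lead {d : ℕ} {J : Type} [LinearOrder J] {f : ((Fin d →₀ ℕ) × J) →₀ ℤ} (hf : f ≠ 0) :
    ∃ i, Lead f i := by
  obtain ⟨i, hi, h⟩ := f.support.exists_max_image key (Finsupp.support_nonempty_iff.2 hf)
  exact ⟨i, by simpa using hi, fun j hj => h j (by simpa using hj)⟩

theorem shf_apply {d : ℕ} {J : Type} (e : Fin d →₀ ℕ) (f : ((Fin d →₀ ℕ) × J) →₀ ℤ) (i) :
    shf e f (e + i.1, i.2) = f i := Finsupp.mapDomain_apply (shinj e) f i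

theorem shf_supp {d : ℕ} {J : Type} (e : Fin d →₀ ℕ) (f : ((Fin d →₀ ℕ) × J) →₀ ℤ) (i)
    (h : shf e f i ≠ 0) : ∃ j, f j ≠ 0 ∧ i = (e + j.1, j.2) := by
  classical
  have := Finsupp.mapDomain_support (Finsupp.mem_support_iff.2 h)
  simp only [Finset.mem_image, Finsupp.mem_support_iff] at this
  obtain ⟨j, h1, h2⟩ := this
  exact ⟨j, h1, h2.symm⟩

theorem lead_shf {d : ℕ} {J : Type} [LinearOrder J] {f : ((Fin d →₀ ℕ) × J) →₀ ℤ} {i}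
    (h : Lead f i) (e : Fin d →₀ ℕ) : Lead (shf e f) (e + i.1, i.2) := by
  refine ⟨by rw [shf_apply]; exact h.1, fun j hj => ?_⟩
  obtain ⟨k, hk, rfl⟩ := shf_supp e f j hj
  exact key_shift e (h.2 k hk)

theorem finite_basis {α : Type} [PartialOrder α] [WellQuasiOrderedLE α] (s : Set α) :
    ∃ t ⊆ s, t.Finite ∧ ∀ x ∈ s, ∃ y ∈ t, y ≤ x := by
  refine ⟨{x | Minimal (· ∈ s) x}, fun x hx => hx.1, ?_, fun x hx => ?_⟩
  · exact WellQuasiOrderedLE.finite_of_isAntichain (setOfPred_minimal_antichain _)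
  · obtain ⟨y, hy, hm⟩ := (Set.isPWO_of_wellQuasiOrderedLE s).exists_le_minimal hx
    exact ⟨y, hm, hy⟩

theorem groebner_basis {d : ℕ} {J : Type} [Finite J] [LinearOrder J]
    (S : AddSubgroup (((Fin d →₀ ℕ) × J) →₀ ℤ)) (hS : ∀ f ∈ S, ∀ e, shf e f ∈ S) :
    ∃ B : Set (((Fin d →₀ ℕ) × J) →₀ ℤ), B.Finite ∧ B ⊆ S ∧
      ∀ f ∈ S, ∀ i, Lead f i → ∃ g ∈ B, ∃ e j, Lead g j ∧ i = (e + j.1, j.2) ∧ g j ∣ f i := by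
  classical
  -- minimal elements
  have hmin : ∀ i : (Fin d →₀ ℕ) × J, (∃ f ∈ S, Lead f i) →
      ∃ g ∈ S, Lead g i ∧ ∀ f ∈ S, Lead f i → (g i).natAbs ≤ (f i).natAbs := by
    rintro i ⟨f, hf, hl⟩
    have hne : {f | f ∈ S ∧ Lead f i}.Nonempty := ⟨f, hf, hl⟩
    refine ⟨Function.argminOn (fun f => (f i).natAbs) _ hne,
      (Function.argminOn_mem (fun f => (f i).natAbs) _ hne).1,
      (Function.argminOn_mem (fun f => (f i).natAbs) _ hne).2, fun f' h1 h2 => ?_⟩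
    exact Function.argminOn_le (fun f => (f i).natAbs) {f | f ∈ S ∧ Lead f i} ⟨h1, h2⟩
  choose! G hGS hGL hGm using hmin
  have hb : ∀ j : J, ∃ t ⊆ {p : (Fin d →₀ ℕ) × ℕ | (∃ f ∈ S, Lead f (p.1, j)) ∧
      p.2 = (G (p.1, j) (p.1, j)).natAbs}, t.Finite ∧ ∀ x ∈ {p : (Fin d →₀ ℕ) × ℕ |
        (∃ f ∈ S, Lead f (p.1, j)) ∧ p.2 = (G (p.1, j) (p.1, j)).natAbs}, ∃ y ∈ t, y ≤ x :=
    fun j => finite_basis _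
  choose t ht1 ht2 ht3 using hb
  refine ⟨⋃ j, (fun p => G (p.1, j)) '' t j, Set.finite_iUnion fun j => (ht2 j).image _, ?_, ?_⟩
  · rintro g hg
    simp only [Set.mem_iUnion, Set.mem_image] at hg
    obtain ⟨j, p, hp, rfl⟩ := hg
    exact hGS _ (ht1 j hp).1
  · rintro f hf ⟨u, j⟩ hl
    obtain ⟨⟨v, c⟩, hy, hle⟩ := ht3 j (u, (G (u, j) (u, j)).natAbs) ⟨⟨f, hf, hl⟩, rfl⟩
    obtain ⟨hvS, hvc⟩ := ht1 j hy
    simp only at hvS hvc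
    refine ⟨G (v, j), Set.mem_iUnion.2 ⟨j, _, hy, rfl⟩, u - v, (v, j), hGL _ hvS, ?_, ?_⟩
    · simp [tsub_add_cancel_of_le hle.1]
    · have huv : u - v + v = u := tsub_add_cancel_of_le hle.1
      have hc : c ≤ (G (u, j) (u, j)).natAbs := hle.2
      have hshS := hS _ (hGS _ hvS) (u - v)
      have hshL := lead_shf (hGL _ hvS) (u - v)
      have hshv := shf_apply (u - v) (G (v, j)) (v, j)
      simp only [huv] at hshL hshv
      set g := shf (u - v) (G (v, j)) with hg
      by_contra hnd
      -- remainder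
      rw [← hshv] at hnd hvc
      have hS' : f - (f (u, j) / g (u, j)) • g ∈ S := S.sub_mem hf (S.zsmul_mem hshS _)
      have hval : (f - (f (u, j) / g (u, j)) • g) (u, j) = f (u, j) % g (u, j) := by
        simp only [Finsupp.sub_apply, Finsupp.smul_apply, smul_eq_mul]
        rw [Int.emod_def, mul_comm]
      have hL' : Lead (f - (f (u, j) / g (u, j)) • g) (u, j) := by
        refine ⟨?_, fun i hi => ?_⟩
        · rw [hval]
          exact fun h => hnd (Int.dvd_of_emod_eq_zero h)
        · by_cases h1 : f i = 0
          · by_cases h2 : g i = 0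
            · exact absurd (by simp [h1, h2]) hi
            · exact hshL.2 i h2
          · exact hl.2 i h1
      have h3 := hGm (u, j) ⟨f, hf, hl⟩ _ hS' hL'
      rw [hval] at h3
      have h4 := Int.emod_lt_abs (f (u, j)) hshL.1
      have h5 := Int.emod_nonneg (f (u, j)) hshL.1
      rw [Int.abs_eq_natAbs] at h4
      omega

theorem groebner {d : ℕ} {J : Type} [Fintype J] [LinearOrder J]
    (S : AddSubgroup (((Fin d →₀ ℕ) × J) →₀ ℤ)) (hS : ∀ f ∈ S, ∀ e, shf e f ∈ S) :
    ∃ B : Set (((Fin d →₀ ℕ) × J) →₀ ℤ), B.Finite ∧ B ⊆ S ∧ ∃ K : ℕ, 0 < K ∧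
      ∀ (D : ℕ) (P : (((Fin d →₀ ℕ) × J) →₀ ℤ) → ℕ → Prop), P 0 0 →
        (∀ f g m n, P f m → P g n → P (f + g) (m + n)) →
        (∀ g ∈ B, ∀ e, (∀ i, g i ≠ 0 → (e + i.1).degree ≤ D) →
          P (shf e g) 1 ∧ P (-shf e g) 1) →
        ∀ f ∈ S, (∀ i, f i ≠ 0 → i.1.degree ≤ D) →
          ∃ N ≤ nrm f * K ^ (Fintype.card J * (D + 1) ^ d), P f N := by
  classical
  obtain ⟨B, hBf, hBS, hB⟩ := groebner_basis S hS
  obtain ⟨κ, hκ⟩ : ∃ κ, ∀ g ∈ B, nrm g ≤ κ := by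
    obtain ⟨κ, h⟩ := (hBf.image nrm).bddAbove
    exact ⟨κ, fun g hg => h ⟨g, hg, rfl⟩⟩
  refine ⟨B, hBf, hBS, κ + 2, by omega, fun D P P0 Padd PB => ?_⟩
  let Ωf : Finset (Fin d → ℕ) := Fintype.piFinset fun _ => Finset.range (D + 1)
  let Ω : Finset ((Fin d →₀ ℕ) × J) :=
    (Ωf.image (fun u => Finsupp.equivFunOnFinite.symm u)) ×ˢ Finset.univ
  have hΩc : Ω.card ≤ Fintype.card J * (D + 1) ^ d := by
    have : (Ωf.image (fun u => Finsupp.equivFunOnFinite.symm u)).card ≤ (D + 1) ^ d := by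
      refine Finset.card_image_le.trans ?_
      simp [Ωf]
    simp only [Ω, Finset.card_product, Finset.card_univ]
    rw [mul_comm]
    exact Nat.mul_le_mul_left _ this
  have hΩ : ∀ i : (Fin d →₀ ℕ) × J, i.1.degree ≤ D → i ∈ Ω := by
    rintro ⟨u, j⟩ hu
    simp only [Ω, Finset.mem_product, Finset.mem_image, Finset.mem_univ, and_true]
    refine ⟨u, ?_, by ext; simp⟩
    simp only [Ωf, Fintype.mem_piFinset, Finset.mem_range]
    intro a
    have := Finsupp.le_degree a u
    simp at hu
    omega
  have main : ∀ m, ∀ f ∈ S, (∀ i, f i ≠ 0 → i.1.degree ≤ D) →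
      (Ω.filter (fun i => ∃ j, f j ≠ 0 ∧ key i ≤ key j)).card ≤ m →
      ∃ N ≤ nrm f * (κ + 2) ^ m, P f N := by
    intro m
    induction m with
    | zero =>
      intro f hf hd hc
      have : f = 0 := by
        by_contra hne
        obtain ⟨i, hi⟩ := exists_lead hne
        have : i ∈ Ω.filter (fun i => ∃ j, f j ≠ 0 ∧ key i ≤ key j) := by
          simp only [Finset.mem_filter]
          exact ⟨hΩ i (hd i hi.1), i, hi.1, le_rfl⟩
        simp only [nonpos_iff_eq_zero, Finset.card_eq_zero] at hc
        rw [hc] at this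
        simp at this
      subst this
      exact ⟨0, by simp, P0⟩
    | succ m ih =>
      intro f hf hd hc
      by_cases hne : f = 0
      · subst hne
        exact ⟨0, by simp, P0⟩
      obtain ⟨i, hi⟩ := exists_lead hne
      obtain ⟨g, hg, e, j, hgl, rfl, q, hq⟩ := hB f hf i hi
      have hshL := lead_shf hgl e
      have hval := shf_apply e g j
      have hcase : ∀ k, (f - q • shf e g) k ≠ 0 → key k ≤ key (e + j.1, j.2) := by
        intro k hk
        by_cases h1 : f k = 0
        · by_cases h2 : shf e g k = 0
          · exact absurd (by simp [h1, h2]) hk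
          · exact hshL.2 k h2
        · exact hi.2 k h1
      have hS' : f - q • shf e g ∈ S := S.sub_mem hf (S.zsmul_mem (hS _ (hBS hg) _) _)
      have hz : (f - q • shf e g) (e + j.1, j.2) = 0 := by
        simp only [Finsupp.sub_apply, Finsupp.smul_apply, smul_eq_mul]
        rw [hval, hq]; ring
      have hdi := hd _ hi.1
      obtain ⟨N, hN, hPN⟩ := ih (f - q • shf e g) hS'
        (fun k hk => (key_deg (hcase k hk)).trans hdi) (by
          have : (Ω.filter (fun i => ∃ j, (f - q • shf e g) j ≠ 0 ∧ key i ≤ key j)) ⊂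
              (Ω.filter (fun i => ∃ j, f j ≠ 0 ∧ key i ≤ key j)) := by
            rw [Finset.ssubset_iff_of_subset]
            · refine ⟨(e + j.1, j.2), ?_, ?_⟩
              · simp only [Finset.mem_filter]
                exact ⟨hΩ _ hdi, _, hi.1, le_rfl⟩
              · simp only [Finset.mem_filter, not_and, not_exists]
                intro _ k hk hle
                have := key_inj (le_antisymm hle (hcase k hk))
                rw [← this] at hk
                exact hk hz
            · intro k hk
              simp only [Finset.mem_filter] at hk ⊢
              obtain ⟨h1, k', h2, h3⟩ := hk
              exact ⟨h1, _, hi.1, h3.trans (hcase k' h2)⟩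
          have := Finset.card_lt_card this
          omega)
      have hPB := PB g hg e (fun k hk => (key_deg (key_shift e (hgl.2 k hk))).trans hdi)
      have hnat : ∀ n : ℕ, P ((n : ℤ) • shf e g) n ∧ P (-((n : ℤ) • shf e g)) n := by
        intro n
        induction n with
        | zero => simpa using P0
        | succ n ihn =>
          refine ⟨?_, ?_⟩
          · have := Padd _ _ _ _ ihn.1 hPB.1
            convert this using 1
            push_cast; rw [add_smul, one_smul]
          · have := Padd _ _ _ _ ihn.2 hPB.2
            convert this using 1
            push_cast; rw [add_smul, one_smul, neg_add]
      have hPq : P (q • shf e g) q.natAbs := by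
        rcases Int.natAbs_eq q with h | h
        · have := (hnat q.natAbs).1
          rwa [← h] at this
        · have := (hnat q.natAbs).2
          rw [← neg_smul, ← h] at this
          exact this
      refine ⟨q.natAbs + N, ?_, ?_⟩
      · have hqf : q.natAbs ≤ nrm f := by
          refine le_trans ?_ (le_nrm f (e + j.1, j.2))
          rw [hq, Int.natAbs_mul]
          have := Int.natAbs_pos.2 hgl.1
          exact Nat.le_mul_of_pos_left _ this
        have hn : nrm (f - q • shf e g) ≤ nrm f * (1 + κ) := by
          have h1 := nrm_add f ((-q) • shf e g)
          rw [neg_smul, ← sub_eq_add_neg] at h1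
          have h2 := nrm_smul (-q) (shf e g)
          rw [neg_smul, nrm_shf, Int.natAbs_neg] at h2
          have h3 := Nat.mul_le_mul hqf (hκ g hg)
          nlinarith
        have h4 : 1 ≤ (κ + 2) ^ m := Nat.one_le_pow _ _ (by omega)
        have h5 := hN.trans (Nat.mul_le_mul_right ((κ + 2) ^ m) hn)
        rw [pow_succ]
        calc q.natAbs + N ≤ nrm f * (κ + 2) ^ m + nrm f * (1 + κ) * (κ + 2) ^ m := by
              refine Nat.add_le_add ?_ h5
              nlinarith
          _ = _ := by ring
      · have := Padd _ _ _ _ hPq hPN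
        convert this using 1
        abel
  intro f hf hd
  exact main _ f hf hd ((Finset.card_filter_le _ _).trans hΩc)

end RD

namespace RD
open scoped commutatorElement

section area
variable {M : Type} [Group M] {R : Set M}

theorem areaIs_iff {w : M} {N : ℕ} : AreaIs R w N ↔ ∃ l : List M, l.length = N ∧
    (∀ x ∈ l, ∃ r f, (r ∈ R ∨ r⁻¹ ∈ R) ∧ x = f⁻¹ * r * f) ∧ w = l.prod := by
  constructor
  · rintro ⟨r, f, h, rfl⟩
    refine ⟨_, List.length_ofFn, ?_, rfl⟩
    intro x hx
    rw [List.mem_ofFn] at hx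
    obtain ⟨i, rfl⟩ := hx
    exact ⟨r i, f i, h i, rfl⟩
  · rintro ⟨l, rfl, h, rfl⟩
    choose! r f h1 h2 using h
    refine ⟨fun i => r (l.get i), fun i => f (l.get i), fun i => h1 _ (List.get_mem _ _), ?_⟩
    congr 1
    conv_lhs => rw [← List.ofFn_get l]
    congr 1
    funext i
    exact h2 _ (List.get_mem _ _)

theorem areaLe_iff {w : M} {N : ℕ} : AreaLe R w N ↔ ∃ l : List M, l.length ≤ N ∧
    (∀ x ∈ l, ∃ r f, (r ∈ R ∨ r⁻¹ ∈ R) ∧ x = f⁻¹ * r * f) ∧ w = l.prod := by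
  unfold AreaLe
  simp only [areaIs_iff]
  constructor
  · rintro ⟨N', h, l, h1, h2⟩
    exact ⟨l, by omega, h2⟩
  · rintro ⟨l, h1, h2⟩
    exact ⟨_, h1, l, rfl, h2⟩

theorem al_one : AreaLe R (1 : M) 0 := areaLe_iff.2 ⟨[], by simp⟩

theorem al_mono {w : M} {m n : ℕ} (h : AreaLe R w m) (hmn : m ≤ n) : AreaLe R w n := by
  obtain ⟨N, h1, h2⟩ := h
  exact ⟨N, h1.trans hmn, h2⟩

theorem al_mul {u v : M} {m n : ℕ} (hu : AreaLe R u m) (hv : AreaLe R v n) :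
    AreaLe R (u * v) (m + n) := by
  rw [areaLe_iff] at *
  obtain ⟨l, h1, h2, rfl⟩ := hu
  obtain ⟨l', h1', h2', rfl⟩ := hv
  refine ⟨l ++ l', by simp; omega, ?_, by simp⟩
  intro x hx
  rcases List.mem_append.1 hx with hx | hx
  · exact h2 x hx
  · exact h2' x hx

theorem al_inv {u : M} {m : ℕ} (hu : AreaLe R u m) : AreaLe R u⁻¹ m := by
  rw [areaLe_iff] at *
  obtain ⟨l, h1, h2, rfl⟩ := hu
  refine ⟨(l.map (·⁻¹)).reverse, by simpa using h1, ?_, List.prod_inv_reverse l⟩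
  intro x hx
  simp only [List.mem_reverse, List.mem_map] at hx
  obtain ⟨y, hy, rfl⟩ := hx
  obtain ⟨r, f, hr, rfl⟩ := h2 y hy
  refine ⟨r⁻¹, f, ?_, by group⟩
  rw [inv_inv]; exact hr.symm

theorem al_conj {u : M} {m : ℕ} (hu : AreaLe R u m) (g : M) : AreaLe R (g * u * g⁻¹) m := by
  rw [areaLe_iff] at *
  obtain ⟨l, h1, h2, rfl⟩ := hu
  refine ⟨l.map (MulAut.conj g), by simpa using h1, ?_, ?_⟩
  · intro x hx
    simp only [List.mem_map] at hx
    obtain ⟨y, hy, rfl⟩ := hx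
    obtain ⟨r, f, hr, rfl⟩ := h2 y hy
    exact ⟨r, f * g⁻¹, hr, by simp; group⟩
  · rw [← map_list_prod]; simp

theorem al_mem {u : M} {m : ℕ} (hu : AreaLe R u m) : u ∈ Subgroup.normalClosure R := by
  rw [areaLe_iff] at *
  obtain ⟨l, h1, h2, rfl⟩ := hu
  refine Subgroup.list_prod_mem _ fun x hx => ?_
  obtain ⟨r, f, hr, rfl⟩ := h2 x hx
  have hr' : r ∈ Subgroup.normalClosure R := by
    rcases hr with h | h
    · exact Subgroup.subset_normalClosure h
    · exact (Subgroup.inv_mem_iff _).1 (Subgroup.subset_normalClosure h)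
  have := Subgroup.normalClosure_normal.conj_mem r hr' f⁻¹
  simpa using this

theorem al_exists {u : M} (hu : u ∈ Subgroup.normalClosure R) : ∃ m, AreaLe R u m := by
  unfold Subgroup.normalClosure at hu
  induction hu using Subgroup.closure_induction with
  | mem x hx =>
    obtain ⟨r, hr, hc⟩ := Group.mem_conjugatesOfSet_iff.1 hx
    obtain ⟨c, hc⟩ := isConj_iff.1 hc
    refine ⟨1, areaLe_iff.2 ⟨[x], by simp, ?_, by simp⟩⟩
    intro y hy
    simp only [List.mem_singleton] at hy
    subst hy
    exact ⟨r, c⁻¹, Or.inl hr, by rw [← hc]; group⟩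
  | one => exact ⟨0, al_one⟩
  | mul x y _ _ hx hy =>
    obtain ⟨m, hm⟩ := hx
    obtain ⟨n, hn⟩ := hy
    exact ⟨_, al_mul hm hn⟩
  | inv x _ hx =>
    obtain ⟨m, hm⟩ := hx
    exact ⟨_, al_inv hm⟩

/-- closeness -/
def Near (R : Set M) (c : ℕ) (u v : M) : Prop := AreaLe R (u * v⁻¹) c

theorem near_refl (u : M) : Near R 0 u u := by
  unfold Near; rw [mul_inv_cancel]; exact al_one

theorem near_mul {u v u' v' : M} {m n : ℕ} (h : Near R m u v) (h' : Near R n u' v') :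
    Near R (m + n) (u * u') (v * v') := by
  unfold Near at *
  have := al_mul (al_conj h' u) h
  rw [add_comm] at this
  convert this using 1
  group

theorem near_inv {u v : M} {m : ℕ} (h : Near R m u v) : Near R m u⁻¹ v⁻¹ := by
  unfold Near at *
  have := al_conj (al_inv h) u⁻¹
  convert this using 1
  group

theorem near_area {u v : M} {m n : ℕ} (h : Near R m u v) (hv : AreaLe R v n) :
    AreaLe R u (m + n) := by
  have := al_mul h hv
  simpa using this

theorem comm_symm {x y : M} {c : ℕ} (h : AreaLe R ⁅x, y⁆ c) : AreaLe R ⁅y, x⁆ c := by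
  rw [← commutatorElement_inv]; exact al_inv h

theorem comm_inv_left {x y : M} {c : ℕ} (h : AreaLe R ⁅x, y⁆ c) : AreaLe R ⁅x⁻¹, y⁆ c := by
  have := al_conj (al_inv h) x⁻¹
  convert this using 1
  simp only [commutatorElement_def]; group

theorem comm_mul_right {x y z : M} {c c' : ℕ} (h : AreaLe R ⁅x, y⁆ c) (h' : AreaLe R ⁅x, z⁆ c') :
    AreaLe R ⁅x, y * z⁆ (c + c') := by
  have := al_mul h (al_conj h' y)
  convert this using 1
  simp only [commutatorElement_def]; group

/-- the value of a signed letter -/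
def cl {I : Type} (b : I → M) (p : I × Bool) : M := cond p.2 (b p.1) (b p.1)⁻¹

/-- evaluation of a list of signed letters -/
def ev {I : Type} (b : I → M) (l : List (I × Bool)) : M := (l.map (cl b)).prod

/-- formal sum -/
noncomputable def sm {I : Type} (l : List (I × Bool)) : I →₀ ℤ :=
  (l.map fun p => Finsupp.single p.1 (cond p.2 1 (-1))).sum

theorem ev_append {I : Type} (b : I → M) (l l' : List (I × Bool)) :
    ev b (l ++ l') = ev b l * ev b l' := by simp [ev]
theorem ev_cons {I : Type} (b : I → M) (p) (l : List (I × Bool)) :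
    ev b (p :: l) = cl b p * ev b l := by simp [ev]
theorem ev_nil {I : Type} (b : I → M) : ev b ([] : List (I × Bool)) = 1 := by simp [ev]
theorem sm_append {I : Type} (l l' : List (I × Bool)) :
    sm (l ++ l') = sm l + sm l' := by simp [sm]
theorem sm_cons {I : Type} (p) (l : List (I × Bool)) :
    sm (p :: l) = Finsupp.single p.1 (cond p.2 1 (-1)) + sm l := by simp [sm]
theorem sm_nil {I : Type} : sm ([] : List (I × Bool)) = 0 := by simp [sm]

theorem comm_cl {I : Type} {b : I → M} {c : ℕ} {p q : I × Bool}
    (h : AreaLe R ⁅b p.1, b q.1⁆ c) : AreaLe R ⁅cl b p, cl b q⁆ c := by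
  have h1 : ∀ x : M, AreaLe R ⁅x, b q.1⁆ c → AreaLe R ⁅x, cl b q⁆ c := by
    intro x hx
    unfold cl
    cases q.2
    · exact comm_symm (comm_inv_left (comm_symm hx))
    · exact hx
  apply h1
  unfold cl
  cases p.2
  · exact comm_inv_left h
  · exact h

theorem comm_ev {I : Type} {b : I → M} {c : ℕ} {x : M} {l : List (I × Bool)}
    (h : ∀ q ∈ l, AreaLe R ⁅x, cl b q⁆ c) : AreaLe R ⁅x, ev b l⁆ (l.length * c) := by
  induction l with
  | nil => simpa [ev_nil] using al_one
  | cons q l ih =>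
    rw [ev_cons]
    have := comm_mul_right (h q (by simp)) (ih fun q' hq' => h q' (by simp [hq']))
    refine al_mono this ?_
    simp; ring_nf; rfl

theorem sm_nonneg {I : Type} (i : I) (β : Bool) (l : List (I × Bool)) (h : (i, !β) ∉ l) :
    0 ≤ (cond β 1 (-1) : ℤ) * sm l i := by
  classical
  induction l with
  | nil => simp [sm_nil]
  | cons p l ih =>
    rw [sm_cons]
    have h1 := ih (fun hh => h (by simp [hh]))
    have h2 : 0 ≤ (cond β 1 (-1) : ℤ) * (Finsupp.single p.1 (cond p.2 1 (-1) : ℤ)) i := by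
      by_cases hp : p.1 = i
      · have : p.2 = β := by
          by_contra hne
          apply h
          have : p = (i, !β) := by
            ext1
            · exact hp
            · revert hne; cases p.2 <;> cases β <;> simp
          simp [this]
        rw [hp, this]
        cases β <;> simp
      · simp [hp]
    rw [Finsupp.add_apply, mul_add]
    omega

theorem sum_zero {I : Type} {b : I → M} {c : ℕ} : ∀ (n : ℕ) (l : List (I × Bool)), l.length ≤ n →
    (∀ p ∈ l, ∀ q ∈ l, AreaLe R ⁅b p.1, b q.1⁆ c) → sm l = 0 →
    AreaLe R (ev b l) (l.length ^ 2 * c) := by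
  intro n
  induction n with
  | zero =>
    intro l hl _ _
    have : l = [] := by simpa using hl
    subst this
    simpa [ev_nil] using al_one
  | succ n ih =>
    intro l hl hc hs
    rcases l with _ | ⟨⟨i, β⟩, t⟩
    · simpa [ev_nil] using al_one
    · have hmem : (i, !β) ∈ t := by
        by_contra hne
        have h1 := sm_nonneg i β t hne
        have h2 := DFunLike.congr_fun hs i
        rw [sm_cons] at h2
        simp at h2
        cases β <;> simp at h1 h2 <;> omega
      obtain ⟨t1, t2, rfl⟩ := List.append_of_mem hmem
      simp only [List.length_cons, List.length_append] at hl
      have hrec := ih (t1 ++ t2) (by simp; omega)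
        (fun p hp q hq => hc p (by simp at hp ⊢; tauto) q (by simp at hq ⊢; tauto)) (by
          rw [← hs, sm_cons, sm_append, sm_append, sm_cons]
          cases β <;> simp [Finsupp.single_neg] <;> abel)
      have hx : AreaLe R ⁅cl b (i, β), ev b t1⁆ (t1.length * c) :=
        comm_ev fun q hq => comm_cl (hc (i, β) (by simp) q (by simp [hq]))
      have := al_mul hx hrec
      have heq : ev b ((i, β) :: (t1 ++ (i, !β) :: t2)) =
          ⁅cl b (i, β), ev b t1⁆ * ev b (t1 ++ t2) := by
        have : cl b (i, !β) = (cl b (i, β))⁻¹ := by cases β <;> simp [cl]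
        rw [ev_cons, ev_append, ev_append, ev_cons, this, commutatorElement_def]
        group
      rw [heq]
      refine al_mono this ?_
      simp only [List.length_cons, List.length_append]
      rw [← add_mul]
      apply Nat.mul_le_mul_right
      nlinarith

/-- inverse list -/
def il {I : Type} (l : List (I × Bool)) : List (I × Bool) := (l.map fun p => (p.1, !p.2)).reverse

theorem ev_il {I : Type} (b : I → M) (l : List (I × Bool)) : ev b (il l) = (ev b l)⁻¹ := by
  unfold ev il
  rw [List.prod_inv_reverse, List.map_reverse, List.map_map, List.map_map]
  congr 3
  funext p
  rcases p with ⟨i, β⟩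
  cases β <;> simp [cl]

theorem sm_il {I : Type} (l : List (I × Bool)) : sm (il l) = - sm l := by
  induction l with
  | nil => simp [sm_nil, il]
  | cons p l ih =>
    have : il (p :: l) = il l ++ [(p.1, !p.2)] := by simp [il]
    rw [this, sm_append, ih, sm_cons, sm_cons, sm_nil]
    rcases p with ⟨i, β⟩
    cases β <;> simp [Finsupp.single_neg]

theorem il_len {I : Type} (l : List (I × Bool)) : (il l).length = l.length := by simp [il]

theorem mem_il {I : Type} {l : List (I × Bool)} {p : I × Bool} (h : p ∈ il l) :
    ∃ q ∈ l, q.1 = p.1 := by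
  simp only [il, List.mem_reverse, List.mem_map] at h
  obtain ⟨q, hq, rfl⟩ := h
  exact ⟨q, hq, rfl⟩

theorem nrm_sm {I : Type} (l : List (I × Bool)) : nrm (sm l) ≤ l.length := by
  induction l with
  | nil => simp [sm_nil, nrm]
  | cons p l ih =>
    rw [sm_cons]
    refine (nrm_add _ _).trans ?_
    rw [nrm_single]
    have : (cond p.2 1 (-1) : ℤ).natAbs = 1 := by cases p.2 <;> simp
    rw [this]
    simp; omega

theorem sm_supp {I : Type} (l : List (I × Bool)) (i : I) (h : sm l i ≠ 0) : ∃ p ∈ l, p.1 = i := by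
  classical
  induction l with
  | nil => simp [sm_nil] at h
  | cons p l ih =>
    by_cases hp : p.1 = i
    · exact ⟨p, by simp, hp⟩
    · rw [sm_cons] at h
      simp [hp] at h
      obtain ⟨q, hq, h'⟩ := ih h
      exact ⟨q, by simp [hq], h'⟩

theorem sm_replicate {I : Type} (i : I) (β : Bool) (n : ℕ) :
    sm (List.replicate n (i, β)) = Finsupp.single i (n * cond β 1 (-1) : ℤ) := by
  induction n with
  | zero => simp [sm_nil]
  | succ n ih =>
    rw [List.replicate_succ, sm_cons, ih, ← Finsupp.single_add]
    congr 1
    push_cast; ring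

theorem canon {I : Type} (f : I →₀ ℤ) : ∃ l : List (I × Bool), sm l = f ∧
    ∀ p ∈ l, f p.1 ≠ 0 := by
  classical
  induction f using Finsupp.induction with
  | zero => exact ⟨[], by simp [sm_nil], by simp⟩
  | single_add i z f hi hz ih =>
    obtain ⟨l, h1, h2⟩ := ih
    simp at hi
    have hz' : (z.natAbs * cond (decide (0 ≤ z)) 1 (-1) : ℤ) = z := by
      by_cases h : 0 ≤ z
      · simp [h]
      · simp [h]; rw [abs_of_neg (by omega)]; ring
    refine ⟨List.replicate z.natAbs (i, decide (0 ≤ z)) ++ l, ?_, ?_⟩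
    · rw [sm_append, sm_replicate, h1, hz']
    · intro p hp
      rcases List.mem_append.1 hp with hp | hp
      · have := List.eq_of_mem_replicate hp
        subst this
        simp [hi, hz]
      · have h3 := h2 p hp
        have : i ≠ p.1 := by rintro rfl; exact h3 hi
        simp [this, h3]

end area
end RD

namespace RD
open scoped commutatorElement

section sig
variable {M : Type} [Group M] {R : Set M}

/-- normal form for monomials -/
def sg {d : ℕ} (s : Fin d → M) (e : Fin d →₀ ℕ) : M := (List.ofFn fun i => s i ^ e i).prod

theorem sg_aux : ∀ {d : ℕ} (s : Fin d → M) (e e' : Fin d → ℕ) (j : Fin d), (∀ i, j < i → e i = 0) →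
    (∀ i, i ≠ j → e' i = e i) → e' j = e j + 1 →
    (List.ofFn fun i => s i ^ e' i).prod = (List.ofFn fun i => s i ^ e i).prod * s j := by
  intro d
  induction d with
  | zero => intro _ _ _ j; exact j.elim0
  | succ d ih =>
    intro s e e' j h0 h1 h2
    rw [List.ofFn_succ', List.ofFn_succ']
    simp only [List.concat_eq_append, List.prod_append, List.prod_cons, List.prod_nil, mul_one]
    refine Fin.lastCases ?_ ?_ j h0 h1 h2
    · intro h0 h1 h2
      rw [h2, pow_succ, mul_assoc]
      congr 3
      funext i
      rw [h1 _ (Fin.castSucc_lt_last i).ne]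
    · intro j h0 h1 h2
      have := ih (fun i => s i.castSucc) (fun i => e i.castSucc) (fun i => e' i.castSucc) j
        (fun i hi => h0 _ (by simpa using hi)) (fun i hi => h1 _ (by simpa using hi)) h2
      rw [this, h1 _ (Fin.castSucc_lt_last j).ne', h0 _ (Fin.castSucc_lt_last j)]
      simp

theorem sg_zero {d : ℕ} (s : Fin d → M) : sg s 0 = 1 := by
  simp [sg]

theorem sg_succ {d : ℕ} (s : Fin d → M) (e : Fin d →₀ ℕ) (j : Fin d) (h : ∀ i, j < i → e i = 0) :
    sg s (e + Finsupp.single j 1) = sg s e * s j := by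
  classical
  refine sg_aux s e _ j h (fun i hi => ?_) ?_
  · simp [hi.symm]
  · simp

theorem sg_induct {d : ℕ} {P : (Fin d →₀ ℕ) → Prop} (h0 : P 0)
    (h1 : ∀ e j, (∀ i, j < i → e i = 0) → P e → P (e + Finsupp.single j 1)) : ∀ e, P e := by
  classical
  have : ∀ n, ∀ e : Fin d →₀ ℕ, e.degree = n → P e := by
    intro n
    induction n with
    | zero => intro e he; rw [(Finsupp.degree_eq_zero_iff e).1 he]; exact h0
    | succ n ih =>
      intro e he
      have hne : e.support.Nonempty := by
        rw [Finsupp.support_nonempty_iff]; rintro rfl; simp at he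
      obtain ⟨j, hj, hm⟩ := e.support.exists_max_image id hne
      have hle : Finsupp.single j 1 ≤ e := by
        rw [Finsupp.single_le_iff]
        simp at hj; omega
      have heq : e - Finsupp.single j 1 + Finsupp.single j 1 = e := tsub_add_cancel_of_le hle
      rw [← heq]
      apply h1
      · intro i hi
        have : e i = 0 := by
          by_contra h
          have := hm i (by simpa using h)
          simp at this
          omega
        simp [this]
      · apply ih
        have := congrArg Finsupp.degree heq
        rw [map_add, he] at this
        simp at this
        exact this
  exact fun e => this _ e rfl

variable {d : ℕ} {J : Type} (s : Fin d → M) (a : J → M)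

/-- letters -/
def lt (i : (Fin d →₀ ℕ) × J) : M := sg s i.1 * a i.2 * (sg s i.1)⁻¹

theorem comm_step (hmet : ∀ p q : M, p ∈ commutator M → q ∈ commutator M → p * q = q * p)
    {x b c y v t : M} {n K : ℕ} (hx : x = b * c) (hc : c ∈ commutator M)
    (h1 : AreaLe R ⁅b, ⁅t, y⁆⁆ K) (h2 : AreaLe R ⁅x, v * y * v⁻¹⁆ n) :
    AreaLe R ⁅x, (v * t) * y * (v * t)⁻¹⁆ (K + n) := by
  have hcm : ∀ p q : M, ⁅p, q⁆ ∈ commutator M := fun p q =>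
    Subgroup.commutator_mem_commutator (Subgroup.mem_top p) (Subgroup.mem_top q)
  have hc' : ⁅b⁻¹, v⁻¹⁆ * (v⁻¹ * c * v) ∈ commutator M := by
    refine mul_mem (hcm _ _) ?_
    have := (inferInstance : (commutator M).Normal).conj_mem c hc v⁻¹
    simpa using this
  set c' := ⁅b⁻¹, v⁻¹⁆ * (v⁻¹ * c * v) with hc'd
  have hxv : v⁻¹ * x * v = b * c' := by
    rw [hc'd, hx, commutatorElement_def]; group
  set m := ⁅t, y⁆ with hm
  have hcom := hmet c' m hc' (hcm _ _)
  have e1 : ⁅x, v * m * v⁻¹⁆ = v * ⁅b, m⁆ * v⁻¹ := by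
    have : ⁅x, v * m * v⁻¹⁆ = v * ⁅v⁻¹ * x * v, m⁆ * v⁻¹ := by
      simp only [commutatorElement_def]; group
    rw [this, hxv]
    have : ⁅b * c', m⁆ = ⁅b, m⁆ := by
      simp only [commutatorElement_def, mul_inv_rev]
      have : b * c' * m * (c'⁻¹ * b⁻¹) * m⁻¹ = b * (c' * m) * c'⁻¹ * b⁻¹ * m⁻¹ := by group
      rw [this, hcom]; group
    rw [this]
  have e2 : v * t * y * (v * t)⁻¹ = (v * m * v⁻¹) * (v * y * v⁻¹) := by
    rw [hm, commutatorElement_def]; group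
  rw [e2]
  refine comm_mul_right ?_ h2
  rw [e1]
  exact al_conj h1 v

theorem comm_bound (hmet : ∀ p q : M, p ∈ commutator M → q ∈ commutator M → p * q = q * p)
    {K : ℕ} (h1 : ∀ i j, AreaLe R ⁅a i, a j⁆ K) (h2 : ∀ i t j, AreaLe R ⁅a i, ⁅s t, a j⁆⁆ K)
    (p q : (Fin d →₀ ℕ) × J) :
    AreaLe R ⁅lt s a p, lt s a q⁆ (K * (p.1.degree + q.1.degree + 1)) := by
  have hcm : ∀ p q : M, ⁅p, q⁆ ∈ commutator M := fun p q =>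
    Subgroup.commutator_mem_commutator (Subgroup.mem_top p) (Subgroup.mem_top q)
  have A1 : ∀ i j (e : Fin d →₀ ℕ), AreaLe R ⁅a i, lt s a (e, j)⁆ (K * (e.degree + 1)) := by
    intro i j
    refine sg_induct ?_ ?_
    · simpa [lt, sg_zero] using h1 i j
    · intro e t he ih
      have := comm_step hmet (x := a i) (b := a i) (c := 1) (by simp) (one_mem _) (h2 i t j) ih
      rw [lt, sg_succ s e t he]
      refine al_mono this ?_
      simp; ring_nf; rfl
  have A2 : ∀ i j (e' e : Fin d →₀ ℕ), AreaLe R ⁅lt s a (e', j), lt s a (e, i)⁆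
      (K * (e'.degree + e.degree + 1)) := by
    intro i j e'
    refine sg_induct ?_ ?_
    · have := comm_symm (A1 i j e')
      simpa [lt, sg_zero] using this
    · intro e t he ih
      have := comm_step hmet (x := lt s a (e', j)) (b := a j)
        (c := ⁅(a j)⁻¹, sg s e'⁆) (by simp [lt, commutatorElement_def]; group) (hcm _ _) (h2 j t i) ih
      rw [lt, lt, sg_succ s e t he]
      refine al_mono this ?_
      simp; ring_nf; rfl
  exact A2 q.2 p.2 p.1 q.1

theorem swap {ic : Fin d → Fin d → J} (hic : ∀ i j, a (ic i j) = ⁅s i, s j⁆) (i : Fin d) :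
    ∀ e : Fin d →₀ ℕ, ∃ l : List (((Fin d →₀ ℕ) × J) × Bool),
      (∀ p ∈ l, p.1.1.degree ≤ e.degree) ∧ l.length ≤ e.degree ∧
      sg s e * s i = ev (lt s a) l * sg s (e + Finsupp.single i 1) := by
  classical
  refine sg_induct ?_ ?_
  · refine ⟨[], by simp, by simp, ?_⟩
    rw [sg_succ s 0 i (by simp), ev_nil, one_mul]
  · rintro e j he ⟨l, h1, h2, h3⟩
    by_cases hij : i < j
    · refine ⟨((e, ic j i), true) :: l, ?_, ?_, ?_⟩
      · intro p hp
        rcases List.mem_cons.1 hp with rfl | hp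
        · simp
        · have := h1 p hp
          simp; omega
      · simp; omega
      · rw [ev_cons, sg_succ s e j he, add_right_comm, sg_succ s (e + Finsupp.single i 1) j]
        · rw [mul_assoc (cl _ _), ← mul_assoc (ev _ _), ← h3]
          simp only [cl, lt, hic, cond_true, commutatorElement_def]
          group
        · intro i' hi'
          have : i ≠ i' := by omega
          simp [he i' hi', this]
    · refine ⟨[], by simp, by simp, ?_⟩
      rw [sg_succ s (e + Finsupp.single j 1) i, ev_nil, one_mul]
      intro i' hi'
      have : j ≠ i' := by omega
      simp [he i' (by omega), this]

theorem swap2 {ic : Fin d → Fin d → J} (hic : ∀ i j, a (ic i j) = ⁅s i, s j⁆) (e : Fin d →₀ ℕ) :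
    ∀ v : Fin d →₀ ℕ, ∃ l : List (((Fin d →₀ ℕ) × J) × Bool),
      (∀ p ∈ l, p.1.1.degree ≤ e.degree + v.degree) ∧
      l.length ≤ v.degree * (e.degree + v.degree) ∧
      sg s e * sg s v = ev (lt s a) l * sg s (e + v) := by
  refine sg_induct ?_ ?_
  · exact ⟨[], by simp, by simp, by simp [sg_zero, ev_nil]⟩
  · rintro v j hv ⟨l, h1, h2, h3⟩
    obtain ⟨l', h1', h2', h3'⟩ := swap s a hic j (e + v)
    refine ⟨l ++ l', ?_, ?_, ?_⟩
    · intro p hp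
      rcases List.mem_append.1 hp with hp | hp
      · have := h1 p hp
        simp; omega
      · have := h1' p hp
        simp at this ⊢; omega
    · simp at h2 h2' ⊢
      nlinarith
    · rw [sg_succ s v j hv, ← mul_assoc, h3, mul_assoc, h3', ev_append, ← add_assoc, mul_assoc]

/-- shift of lists -/
noncomputable def shl (e : Fin d →₀ ℕ) (l : List (((Fin d →₀ ℕ) × J) × Bool)) :
    List (((Fin d →₀ ℕ) × J) × Bool) := l.map fun p => ((e + p.1.1, p.1.2), p.2)

theorem sm_shl (e : Fin d →₀ ℕ) (l : List (((Fin d →₀ ℕ) × J) × Bool)) :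
    sm (shl e l) = shf e (sm l) := by
  induction l with
  | nil => simp [sm_nil, shl, shf]
  | cons p l ih =>
    have : shl e (p :: l) = ((e + p.1.1, p.1.2), p.2) :: shl e l := by simp [shl]
    rw [this, sm_cons, ih, sm_cons]
    simp [shf, Finsupp.mapDomain_add, Finsupp.mapDomain_single]

theorem shift_letter (hmet : ∀ p q : M, p ∈ commutator M → q ∈ commutator M → p * q = q * p)
    {K : ℕ} (h1 : ∀ i j, AreaLe R ⁅a i, a j⁆ K) (h2 : ∀ i t j, AreaLe R ⁅a i, ⁅s t, a j⁆⁆ K)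
    {ic : Fin d → Fin d → J} (hic : ∀ i j, a (ic i j) = ⁅s i, s j⁆) (D : ℕ)
    (e : Fin d →₀ ℕ) (i : (Fin d →₀ ℕ) × J) (hD : (e + i.1).degree ≤ D) :
    Near R (D * D * (K * (2 * D + 1))) (lt s a (e + i.1, i.2)) (sg s e * lt s a i * (sg s e)⁻¹) := by
  obtain ⟨l, g1, g2, g3⟩ := swap2 s a hic e i.1
  rw [map_add] at hD
  have hl : l.length ≤ D * D := g2.trans (Nat.mul_le_mul (by omega) hD)
  have heq : sg s e * lt s a i * (sg s e)⁻¹ =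
      ev (lt s a) l * lt s a (e + i.1, i.2) * (ev (lt s a) l)⁻¹ := by
    have : sg s e * lt s a i * (sg s e)⁻¹ = (sg s e * sg s i.1) * a i.2 * (sg s e * sg s i.1)⁻¹ := by
      simp only [lt]; group
    rw [this, g3]
    simp only [lt]; group
  have hcc : ∀ q ∈ l, AreaLe R ⁅lt s a (e + i.1, i.2), cl (lt s a) q⁆ (K * (2 * D + 1)) := by
    intro q hq
    have h3 : AreaLe R ⁅lt s a (e + i.1, i.2), lt s a q.1⁆ (K * (2 * D + 1)) := by
      refine al_mono (comm_bound s a hmet h1 h2 (e + i.1, i.2) q.1) ?_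
      have := g1 q hq
      apply Nat.mul_le_mul_left
      simp
      omega
    exact comm_cl (R := R) (b := lt s a) (p := ((e + i.1, i.2), true)) (q := q) h3
  have hc := comm_ev hcc
  unfold Near
  rw [heq]
  refine al_mono (?_ : AreaLe R _ (l.length * (K * (2 * D + 1)))) (Nat.mul_le_mul_right _ hl)
  convert hc using 1
  simp only [commutatorElement_def]; group

theorem shift_list (hmet : ∀ p q : M, p ∈ commutator M → q ∈ commutator M → p * q = q * p)
    {K : ℕ} (h1 : ∀ i j, AreaLe R ⁅a i, a j⁆ K) (h2 : ∀ i t j, AreaLe R ⁅a i, ⁅s t, a j⁆⁆ K)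
    {ic : Fin d → Fin d → J} (hic : ∀ i j, a (ic i j) = ⁅s i, s j⁆) (D : ℕ)
    (e : Fin d →₀ ℕ) (l : List (((Fin d →₀ ℕ) × J) × Bool))
    (hD : ∀ p ∈ l, (e + p.1.1).degree ≤ D) :
    Near R (l.length * (D * D * (K * (2 * D + 1)))) (ev (lt s a) (shl e l))
      (sg s e * ev (lt s a) l * (sg s e)⁻¹) := by
  induction l with
  | nil => simpa [ev_nil, shl] using near_refl (R := R) (1 : M)
  | cons p l ih =>
    have hsh : shl e (p :: l) = ((e + p.1.1, p.1.2), p.2) :: shl e l := by simp [shl]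
    rw [hsh, ev_cons, ev_cons]
    have hp := shift_letter s a hmet h1 h2 hic D e p.1 (hD p (by simp))
    have hp' : Near R (D * D * (K * (2 * D + 1))) (cl (lt s a) ((e + p.1.1, p.1.2), p.2))
        (sg s e * cl (lt s a) p * (sg s e)⁻¹) := by
      unfold cl
      cases p.2
      · have := near_inv hp
        simp only [cond_false]
        convert this using 1
        group
      · exact hp
    have := near_mul hp' (ih fun q hq => hD q (by simp [hq]))
    have e1 : l.length * (D * D * (K * (2 * D + 1))) + (D * D * (K * (2 * D + 1))) =
      (p :: l).length * (D * D * (K * (2 * D + 1))) := by simp; ring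
    rw [add_comm, e1] at this
    convert this using 1
    group

end sig
end RD

namespace RD
open scoped commutatorElement

section fin
variable {M : Type} [Group M] {R : Set M} {d : ℕ} {J : Type} (s : Fin d → M) (a : J → M)

/-- the relation module -/
noncomputable def relS (hmet : ∀ p q : M, p ∈ commutator M → q ∈ commutator M → p * q = q * p)
    {K : ℕ} (h1 : ∀ i j, AreaLe R ⁅a i, a j⁆ K) (h2 : ∀ i t j, AreaLe R ⁅a i, ⁅s t, a j⁆⁆ K) :
    AddSubgroup (((Fin d →₀ ℕ) × J) →₀ ℤ) where
  carrier := {f | ∃ l, sm l = f ∧ ev (lt s a) l ∈ Subgroup.normalClosure R}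
  zero_mem' := ⟨[], sm_nil, by rw [ev_nil]; exact one_mem _⟩
  add_mem' := by
    rintro f g ⟨l, rfl, h⟩ ⟨l', rfl, h'⟩
    exact ⟨l ++ l', sm_append _ _, by rw [ev_append]; exact mul_mem h h'⟩
  neg_mem' := by
    rintro f ⟨l, rfl, h⟩
    exact ⟨il l, sm_il _, by rw [ev_il]; exact inv_mem h⟩

theorem list_bdd (l : List (((Fin d →₀ ℕ) × J) × Bool)) (e : Fin d →₀ ℕ) :
    ∃ D, ∀ p ∈ l, (e + p.1.1).degree ≤ D := by
  induction l with
  | nil => exact ⟨0, by simp⟩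
  | cons q l ih =>
    obtain ⟨D, hD⟩ := ih
    refine ⟨max D (e + q.1.1).degree, fun p hp => ?_⟩
    rcases List.mem_cons.1 hp with rfl | hp
    · exact le_max_right _ _
    · exact (hD p hp).trans (le_max_left _ _)

theorem same_sum (hmet : ∀ p q : M, p ∈ commutator M → q ∈ commutator M → p * q = q * p)
    {K : ℕ} (h1 : ∀ i j, AreaLe R ⁅a i, a j⁆ K) (h2 : ∀ i t j, AreaLe R ⁅a i, ⁅s t, a j⁆⁆ K)
    (D : ℕ) (l l' : List (((Fin d →₀ ℕ) × J) × Bool)) (hs : sm l = sm l')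
    (hl : ∀ p ∈ l, p.1.1.degree ≤ D) (hl' : ∀ p ∈ l', p.1.1.degree ≤ D) :
    Near R ((l.length + l'.length) ^ 2 * (K * (2 * D + 1))) (ev (lt s a) l) (ev (lt s a) l') := by
  have hb : ∀ p ∈ l ++ il l', p.1.1.degree ≤ D := by
    intro p hp
    rcases List.mem_append.1 hp with hp | hp
    · exact hl p hp
    · obtain ⟨q, hq, h⟩ := mem_il hp
      rw [← h]; exact hl' q hq
  have := sum_zero (R := R) (b := lt s a) (c := K * (2 * D + 1)) _ (l ++ il l') le_rfl (by
    intro p hp q hq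
    refine al_mono (comm_bound s a hmet h1 h2 _ _) (Nat.mul_le_mul_left _ ?_)
    have := hb p hp
    have := hb q hq
    omega) (by rw [sm_append, sm_il, hs]; abel)
  rw [ev_append, ev_il, List.length_append, il_len] at this
  exact this

theorem abs_area [Finite J]
    (hmet : ∀ p q : M, p ∈ commutator M → q ∈ commutator M → p * q = q * p)
    {K : ℕ} (h1 : ∀ i j, AreaLe R ⁅a i, a j⁆ K) (h2 : ∀ i t j, AreaLe R ⁅a i, ⁅s t, a j⁆⁆ K)
    {ic : Fin d → Fin d → J} (hic : ∀ i j, a (ic i j) = ⁅s i, s j⁆) :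
    ∃ C : ℕ, 0 < C ∧ ∀ (D : ℕ) (l : List (((Fin d →₀ ℕ) × J) × Bool)),
      (∀ p ∈ l, p.1.1.degree ≤ D) → ev (lt s a) l ∈ Subgroup.normalClosure R →
      AreaLe R (ev (lt s a) l) (C * l.length ^ 2 * (D + 1) ^ 3 * C ^ ((D + 1) ^ d)) := by
  classical
  have : Fintype J := Fintype.ofFinite J
  let lo : LinearOrder J := LinearOrder.lift' (Fintype.equivFin J) (Fintype.equivFin J).injective
  let S := relS s a hmet h1 h2
  have hSsh : ∀ f ∈ S, ∀ e, shf e f ∈ S := by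
    rintro f ⟨l, rfl, h⟩ e
    refine ⟨shl e l, sm_shl e l, ?_⟩
    obtain ⟨D, hD⟩ := list_bdd l e
    have := al_mem (shift_list s a hmet h1 h2 hic D e l hD)
    have h3 := Subgroup.normalClosure_normal.conj_mem _ h (sg s e)
    have h4 := mul_mem this h3
    rwa [inv_mul_cancel_right] at h4
  have hSall : ∀ l, sm l ∈ S → ev (lt s a) l ∈ Subgroup.normalClosure R := by
    rintro l ⟨l', hs, h⟩
    obtain ⟨D, hD⟩ := list_bdd l 0
    obtain ⟨D', hD'⟩ := list_bdd l' 0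
    have := al_mem (same_sum s a hmet h1 h2 (max D D') l l' hs.symm
      (fun p hp => by have := hD p hp; rw [zero_add] at this; exact this.trans (le_max_left _ _))
      (fun p hp => by have := hD' p hp; rw [zero_add] at this; exact this.trans (le_max_right _ _)))
    simpa using mul_mem this h
  obtain ⟨B, hBf, hBS, K1, hK1, hG⟩ := groebner S hSsh
  -- choose lists for basis
  choose lg hlg1 hlg2 using fun g : (((Fin d →₀ ℕ) × J) →₀ ℤ) => canon g
  obtain ⟨κ, hκ⟩ : ∃ κ, ∀ g ∈ B, (lg g).length ≤ κ := by
    obtain ⟨κ, h⟩ := (hBf.image fun g => (lg g).length).bddAbove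
    exact ⟨κ, fun g hg => h ⟨g, hg, rfl⟩⟩
  have hα : ∀ g, ∃ m, g ∈ B → AreaLe R (ev (lt s a) (lg g)) m := by
    intro g
    by_cases hg : g ∈ B
    · obtain ⟨m, hm⟩ := al_exists (hSall (lg g) (by rw [hlg1]; exact hBS hg))
      exact ⟨m, fun _ => hm⟩
    · exact ⟨0, fun h => absurd h hg⟩
  choose ar har using hα
  obtain ⟨α, hα⟩ : ∃ α, ∀ g ∈ B, ar g ≤ α := by
    obtain ⟨κ, h⟩ := (hBf.image ar).bddAbove
    exact ⟨κ, fun g hg => h ⟨g, hg, rfl⟩⟩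
  set C0 := 2 * K * (1 + κ) ^ 2 + 2 * κ * K + α with hC0
  set C1 := K1 ^ (2 * Fintype.card J) with hC1
  refine ⟨C0 + C1 + 1, by omega, fun D l hD hl => ?_⟩
  have hlS : sm l ∈ S := ⟨l, rfl, hl⟩
  set A := κ * (D * D * (K * (2 * D + 1))) + α with hA
  let P : (((Fin d →₀ ℕ) × J) →₀ ℤ) → ℕ → Prop := fun f N => ∃ l', sm l' = f ∧
    (∀ p ∈ l', p.1.1.degree ≤ D) ∧ l'.length ≤ κ * N ∧ AreaLe R (ev (lt s a) l') (A * N)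
  obtain ⟨N, hN, l', q1, q2, q3, q4⟩ := hG D P
    ⟨[], sm_nil, by simp, by simp, by rw [ev_nil]; exact al_mono al_one (Nat.zero_le _)⟩
    (by
      rintro f g m n ⟨l1, u1, u2, u3, u4⟩ ⟨l2, v1, v2, v3, v4⟩
      refine ⟨l1 ++ l2, by rw [sm_append, u1, v1], ?_, ?_, ?_⟩
      · intro p hp
        rcases List.mem_append.1 hp with hp | hp
        · exact u2 p hp
        · exact v2 p hp
      · simp; nlinarith
      · rw [ev_append, mul_add]; exact al_mul u4 v4)
    (by
      intro g hg e he
      have hshb : ∀ p ∈ shl e (lg g), p.1.1.degree ≤ D := by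
        intro p hp
        simp only [shl, List.mem_map] at hp
        obtain ⟨q, hq, rfl⟩ := hp
        exact he q.1 (hlg2 g q hq)
      have hlen : (shl e (lg g)).length ≤ κ * 1 := by
        simpa [shl] using hκ g hg
      have hsm : sm (shl e (lg g)) = shf e g := by rw [sm_shl, hlg1]
      have har' : AreaLe R (ev (lt s a) (shl e (lg g))) (A * 1) := by
        have := near_area (shift_list s a hmet h1 h2 hic D e (lg g)
          (fun p hp => he p.1 (hlg2 g p hp))) (al_conj (har g hg) (sg s e))
        refine al_mono this ?_
        rw [hA, mul_one]
        exact Nat.add_le_add (Nat.mul_le_mul_right _ (hκ g hg)) (hα g hg)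
      refine ⟨⟨_, hsm, hshb, hlen, har'⟩, il (shl e (lg g)), by rw [sm_il, hsm], ?_, ?_, ?_⟩
      · intro p hp
        obtain ⟨q, hq, h⟩ := mem_il hp
        rw [← h]; exact hshb q hq
      · rw [il_len]; exact hlen
      · rw [ev_il]; exact al_inv har')
    (sm l) hlS (by
      intro i hi
      obtain ⟨p, hp, rfl⟩ := sm_supp l i hi
      exact hD p hp)
  have hnear := near_area (same_sum s a hmet h1 h2 D l l' q1.symm hD q2) q4
  refine al_mono hnear ?_
  -- arithmetic
  set L := l.length with hL
  set E := (D + 1) ^ d with hE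
  set Z := K1 ^ (Fintype.card J * E) with hZ
  have hZ1 : 1 ≤ Z := Nat.one_le_pow _ _ hK1
  have hNZ : N ≤ L * Z := hN.trans (Nat.mul_le_mul_right _ (nrm_sm l))
  have hLZ : L ≤ L * Z := Nat.le_mul_of_pos_right _ hZ1
  have hsum : L + l'.length ≤ (1 + κ) * (L * Z) := by
    have := Nat.mul_le_mul_left κ hNZ
    nlinarith
  have hZC : Z ^ 2 = C1 ^ E := by
    rw [hZ, hC1, ← pow_mul, ← pow_mul]; congr 1; ring
  have hD1 : 2 * D + 1 ≤ 2 * (D + 1) ^ 3 := by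
    have : D + 1 ≤ (D + 1) ^ 3 := Nat.le_self_pow (by norm_num) _
    omega
  have hD2 : D * D * (2 * D + 1) ≤ 2 * (D + 1) ^ 3 := by ring_nf; nlinarith
  have hD3 : 1 ≤ (D + 1) ^ 3 := Nat.one_le_pow _ _ (by omega)
  have hLL : L * Z ≤ L ^ 2 * Z ^ 2 := by
    rw [← mul_pow]; exact Nat.le_self_pow (by norm_num) _
  have t1 : (L + l'.length) ^ 2 * (K * (2 * D + 1)) ≤
      (2 * K * (1 + κ) ^ 2) * (L ^ 2 * Z ^ 2 * (D + 1) ^ 3) := by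
    calc (L + l'.length) ^ 2 * (K * (2 * D + 1))
        ≤ ((1 + κ) * (L * Z)) ^ 2 * (K * (2 * (D + 1) ^ 3)) := by gcongr
      _ = _ := by ring
  have t2 : A * N ≤ (2 * κ * K + α) * (L ^ 2 * Z ^ 2 * (D + 1) ^ 3) := by
    calc A * N ≤ ((2 * κ * K + α) * (D + 1) ^ 3) * (L ^ 2 * Z ^ 2) := by
          refine Nat.mul_le_mul ?_ (hNZ.trans hLL)
          rw [hA, add_mul]
          refine Nat.add_le_add ?_ (Nat.le_mul_of_pos_right _ hD3)
          calc κ * (D * D * (K * (2 * D + 1))) = κ * K * (D * D * (2 * D + 1)) := by ring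
            _ ≤ κ * K * (2 * (D + 1) ^ 3) := Nat.mul_le_mul_left _ hD2
            _ = _ := by ring
      _ = _ := by ring
  calc _ ≤ C0 * (L ^ 2 * Z ^ 2 * (D + 1) ^ 3) := by
        refine (Nat.add_le_add t1 t2).trans (le_of_eq ?_)
        rw [hC0]; ring
    _ = C0 * L ^ 2 * (D + 1) ^ 3 * C1 ^ E := by rw [hZC]; ring
    _ ≤ _ := by
        gcongr <;> omega

end fin
end RD

namespace RD
open scoped commutatorElement

section words
variable {M : Type} [Group M] {R : Set M} {d : ℕ} {J : Type} (s : Fin d → M) (a : J → M)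

theorem word_nf {ic : Fin d → Fin d → J} (hic : ∀ i j, a (ic i j) = ⁅s i, s j⁆)
    {Cs Y : Type} (f : Cs → M) (y : Y → M) (c0 : Cs) (hf : f c0 = 1) (V : ℕ)
    (htr : ∀ c x, ∃ j v c', f c * y x = a j * sg s v * f c' ∧ v.degree ≤ V) (w : List Y) :
    ∃ (l : List (((Fin d →₀ ℕ) × J) × Bool)) (e : Fin d →₀ ℕ) (c : Cs),
      (w.map y).prod = ev (lt s a) l * sg s e * f c ∧ e.degree ≤ V * w.length ∧
      (∀ p ∈ l, p.1.1.degree ≤ V * w.length) ∧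
      l.length ≤ w.length + w.length * (V * (V * w.length)) := by
  induction w using List.reverseRecOn with
  | nil => exact ⟨[], 0, c0, by simp [ev_nil, sg_zero, hf], by simp, by simp, by simp⟩
  | append_singleton w x ih =>
    obtain ⟨l, e, c, g1, g2, g3, g4⟩ := ih
    obtain ⟨j, v, c', k1, k2⟩ := htr c x
    obtain ⟨l2, m1, m2, m3⟩ := swap2 s a hic e v
    have hV : V * (w ++ [x]).length = V * w.length + V := by simp; ring
    have hlen : (w ++ [x]).length = w.length + 1 := by simp
    refine ⟨l ++ ((e, j), true) :: l2, e + v, c', ?_, ?_, ?_, ?_⟩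
    · rw [List.map_append, List.prod_append, g1, ev_append, ev_cons]
      simp only [List.map_cons, List.map_nil, List.prod_cons, List.prod_nil, mul_one]
      have e1 : ev (lt s a) l * (cl (lt s a) ((e, j), true) * ev (lt s a) l2) * sg s (e + v) * f c'
        = ev (lt s a) l * cl (lt s a) ((e, j), true) * (ev (lt s a) l2 * sg s (e + v)) * f c' := by
        group
      rw [e1, ← m3, mul_assoc _ (f c), k1]
      simp only [cl, lt, cond_true]
      group
    · rw [map_add, hV]; omega
    · intro p hp
      rw [hV]
      rcases List.mem_append.1 hp with hp | hp
      · have := g3 p hp; omega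
      · rcases List.mem_cons.1 hp with rfl | hp
        · simp; omega
        · have := m1 p hp; omega
    · have h5 : l2.length ≤ V * (V * (w.length + 1)) := by
        refine m2.trans (Nat.mul_le_mul k2 ?_)
        rw [mul_add]; omega
      rw [hlen]
      simp only [List.length_append, List.length_cons]
      nlinarith

theorem close_nf {k : ℕ} (s : Fin (k + k) → M) (a : J → M)
    (hs : ∀ i, s (Fin.natAdd k i) = (s (Fin.castAdd k i))⁻¹)
    {ic : Fin (k + k) → Fin (k + k) → J} (hic : ∀ i j, a (ic i j) = ⁅s i, s j⁆) :
    ∀ (n : ℕ) (e : Fin (k + k) →₀ ℕ), e.degree ≤ n →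
      (∀ i, e (Fin.castAdd k i) = e (Fin.natAdd k i)) →
    ∃ l : List (((Fin (k + k) →₀ ℕ) × J) × Bool), (∀ p ∈ l, p.1.1.degree ≤ e.degree) ∧
      l.length ≤ 2 * e.degree ^ 2 ∧ sg s e = ev (lt s a) l := by
  classical
  intro n
  induction n with
  | zero =>
    intro e he _
    have : e = 0 := (Finsupp.degree_eq_zero_iff e).1 (by omega)
    subst this
    exact ⟨[], by simp, by simp, by simp [sg_zero, ev_nil]⟩
  | succ n ih =>
    intro e he hsym
    by_cases h0 : ∀ i : Fin k, e (Fin.castAdd k i) = 0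
    · have : e = 0 := by
        ext i
        refine Fin.addCases (fun i => h0 i) (fun i => ?_) i
        rw [← hsym]; exact h0 i
      subst this
      exact ⟨[], by simp, by simp, by simp [sg_zero, ev_nil]⟩
    push Not at h0
    obtain ⟨i, hi⟩ := h0
    set i1 := Fin.castAdd k i with hi1
    set i2 := Fin.natAdd k i with hi2
    have hne : i1 ≠ i2 := by
      intro h; have := congrArg Fin.val h; simp [hi1, hi2] at this; have := i.2; omega
    have hle : Finsupp.single i1 1 + Finsupp.single i2 1 ≤ e := by
      intro t
      have := hsym i
      rw [Finsupp.add_apply, Finsupp.single_apply, Finsupp.single_apply]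
      by_cases t1 : i1 = t
      · subst t1; rw [if_pos rfl, if_neg hne.symm]; exact Nat.one_le_iff_ne_zero.2 hi
      · rw [if_neg t1]
        by_cases t2 : i2 = t
        · subst t2; rw [if_pos rfl, zero_add]; exact (Nat.one_le_iff_ne_zero.2 hi).trans this.le
        · rw [if_neg t2]; omega
    obtain ⟨e', rfl⟩ := exists_add_of_le hle
    have hcomm : Finsupp.single i1 1 + Finsupp.single i2 1 + e' =
      e' + Finsupp.single i1 1 + Finsupp.single i2 1 := by abel
    rw [hcomm] at he hsym ⊢
    simp only [map_add, Finsupp.degree_single] at he ⊢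
    have hsym' : ∀ i, e' (Fin.castAdd k i) = e' (Fin.natAdd k i) := by
      intro t
      have := hsym t
      simp only [Finsupp.add_apply, Finsupp.single_apply] at this
      have a1 : ¬ i1 = Fin.natAdd k t := by
        intro h; have := congrArg Fin.val h; simp [hi1] at this; have := i.2; omega
      have a2 : ¬ i2 = Fin.castAdd k t := by
        intro h; have := congrArg Fin.val h; simp [hi2] at this; have := t.2; omega
      rw [if_neg a1, if_neg a2] at this
      by_cases h : i = t
      · subst h; rw [if_pos rfl, if_pos rfl] at this; omega
      · have b1 : ¬ i1 = Fin.castAdd k t := by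
          intro h'; apply h; have := congrArg Fin.val h'; simp [hi1] at this; exact Fin.ext this
        have b2 : ¬ i2 = Fin.natAdd k t := by
          intro h'; apply h; have := congrArg Fin.val h'; simp [hi2] at this; exact Fin.ext this
        rw [if_neg b1, if_neg b2] at this; omega
    obtain ⟨l', p1, p2, p3⟩ := ih e' (by omega) hsym'
    obtain ⟨l1, q1, q2, q3⟩ := swap s a hic i1 e'
    obtain ⟨l2, r1, r2, r3⟩ := swap s a hic i2 (e' + Finsupp.single i1 1)
    simp only [map_add, Finsupp.degree_single] at r1 r2
    refine ⟨il (l1 ++ l2) ++ l', ?_, ?_, ?_⟩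
    · intro p hp
      rcases List.mem_append.1 hp with hp | hp
      · obtain ⟨q, hq, h⟩ := mem_il hp
        rw [← h]
        rcases List.mem_append.1 hq with hq | hq
        · have := q1 q hq; omega
        · have := r1 q hq; omega
      · have := p1 p hp; omega
    · rw [List.length_append, il_len, List.length_append]
      nlinarith
    · rw [ev_append, ev_il, ev_append, ← p3]
      have : sg s e' = ev (lt s a) l1 * ev (lt s a) l2 *
          sg s (e' + Finsupp.single i1 1 + Finsupp.single i2 1) := by
        rw [mul_assoc, ← r3, ← mul_assoc, ← q3, hi2, hs, ← hi1]; group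
      rw [this]; group

end words

section main
variable {M : Type} [Group M] {R : Set M}

theorem main_area
    (hmet : ∀ p q : M, p ∈ commutator M → q ∈ commutator M → p * q = q * p)
    {Q : Type} [Group Q] (hQ : ∀ x y : Q, x * y = y * x) (π : M →* Q) (hπ : Surjective π)
    (hN : Subgroup.normalClosure R ≤ π.ker)
    (hA : ∀ p q, p ∈ π.ker → q ∈ π.ker → ⁅p, q⁆ ∈ Subgroup.normalClosure R)
    {k : ℕ} (H : Subgroup Q) (hH : H.index ≠ 0) (φ : H ≃* Multiplicative (Fin k → ℤ))
    {Y : Type} [Finite Y] (y : Y → M) :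
    ∃ C V : ℕ, 0 < C ∧ (k = 0 → V = 0) ∧ ∀ w : List Y,
      (w.map y).prod ∈ Subgroup.normalClosure R →
      AreaLe R (w.map y).prod (C * (w.length + 3 * (V * w.length) ^ 2) ^ 2 *
        (V * w.length + 1) ^ 3 * C ^ ((V * w.length + 1) ^ (k + k))) := by
  classical
  let ψ : (Fin k → ℤ) → Q := fun x => (φ.symm (Multiplicative.ofAdd x) : Q)
  have ψadd : ∀ x z, ψ (x + z) = ψ x * ψ z := by
    intro x z; simp [ψ, ofAdd_add]
  have ψzero : ψ 0 = 1 := by simp [ψ]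
  have ψinj : ∀ x, ψ x = 1 → x = 0 := by
    intro x hx
    have : φ.symm (Multiplicative.ofAdd x) = 1 := Subtype.ext hx
    simpa using this
  have ψneg : ∀ x, ψ (-x) = (ψ x)⁻¹ := by
    intro x; rw [eq_inv_iff_mul_eq_one, ← ψadd]; simp [ψzero]
  have ψH : ∀ x, ψ x ∈ H := fun x => (φ.symm (Multiplicative.ofAdd x)).2
  have ψsurj : ∀ h ∈ H, ∃ x, ψ x = h := by
    intro h hh
    exact ⟨Multiplicative.toAdd (φ ⟨h, hh⟩), by simp [ψ]⟩
  choose s0 hs0 using fun i : Fin k => hπ (ψ (Pi.single i 1))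
  let s : Fin (k + k) → M := Fin.append s0 (fun i => (s0 i)⁻¹)
  have hs1 : ∀ i, s (Fin.castAdd k i) = s0 i := fun i => by simp [s]
  have hs2 : ∀ i, s (Fin.natAdd k i) = (s0 i)⁻¹ := fun i => Fin.append_right _ _ _
  have hsinv : ∀ i, s (Fin.natAdd k i) = (s (Fin.castAdd k i))⁻¹ := fun i => by rw [hs1, hs2]
  let Df : (Fin (k + k) →₀ ℕ) → (Fin k → ℤ) :=
    fun e i => (e (Fin.castAdd k i) : ℤ) - e (Fin.natAdd k i)
  have hDadd : ∀ e e', Df (e + e') = Df e + Df e' := by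
    intro e e'; funext i; simp [Df]; ring
  have hsD : ∀ j, π (s j) = ψ (Df (Finsupp.single j 1)) := by
    intro j
    refine Fin.addCases (fun i => ?_) (fun i => ?_) j
    · rw [hs1, hs0]
      congr 1
      funext t
      have : ¬ Fin.castAdd k i = Fin.natAdd k t := by
        intro h; have := congrArg Fin.val h; simp at this; have := i.2; omega
      by_cases h : i = t
      · subst h; simp [Df, this, -Fin.natAdd_eq_addNat]
      · have h2 : ¬ Fin.castAdd k i = Fin.castAdd k t := by
          intro h'; apply h; have := congrArg Fin.val h'; simp at this; exact Fin.ext this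
        simp [-Fin.natAdd_eq_addNat, Df, Finsupp.single_apply, this, h2, Pi.single_apply, Ne.symm h]
    · rw [hs2, map_inv, hs0, ← ψneg]
      congr 1
      funext t
      have : ¬ Fin.natAdd k i = Fin.castAdd k t := by
        intro h; have := congrArg Fin.val h; simp at this; have := t.2; omega
      by_cases h : i = t
      · subst h; simp [Df, this, -Fin.natAdd_eq_addNat]
      · have h2 : ¬ Fin.natAdd k i = Fin.natAdd k t := by
          intro h'; apply h; have := congrArg Fin.val h'; simp at this; exact Fin.ext this
        simp [-Fin.natAdd_eq_addNat, Df, Finsupp.single_apply, this, h2, Pi.single_apply, Ne.symm h]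
  have hsg : ∀ e, π (sg s e) = ψ (Df e) := by
    refine sg_induct ?_ ?_
    · rw [sg_zero, map_one]
      have : Df 0 = 0 := by funext i; simp [Df]
      rw [this, ψzero]
    · intro e j he ih
      rw [sg_succ s e j he, map_mul, ih, hsD, ← ψadd, hDadd]
  have hDsurj : ∀ x, ∃ e, Df e = x := by
    intro x
    refine ⟨Finsupp.equivFunOnFinite.symm
      (Fin.append (fun i => (x i).toNat) (fun i => (-x i).toNat)), ?_⟩
    funext i
    simp only [Df, Finsupp.equivFunOnFinite_symm_apply_apply, Fin.append_left, Fin.append_right]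
    omega
  -- coset representatives
  have : Finite (Q ⧸ H) := by
    have : H.FiniteIndex := ⟨hH⟩
    infer_instance
  have hf' : ∀ c : Q ⧸ H, ∃ m : M, (QuotientGroup.mk (π m) : Q ⧸ H) = c ∧
      (c = QuotientGroup.mk 1 → m = 1) := by
    intro c
    by_cases h : c = QuotientGroup.mk 1
    · exact ⟨1, by rw [map_one, h], fun _ => rfl⟩
    · obtain ⟨q, rfl⟩ := QuotientGroup.mk_surjective c
      obtain ⟨m, rfl⟩ := hπ q
      exact ⟨m, rfl, fun h' => absurd h' h⟩
  choose f hf1 hf2 using hf'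
  have htr : ∀ (c : Q ⧸ H) (x : Y), ∃ (m : M) (v : Fin (k + k) →₀ ℕ) (c' : Q ⧸ H),
      m ∈ π.ker ∧ f c * y x = m * sg s v * f c' := by
    intro c x
    let c' : Q ⧸ H := QuotientGroup.mk (π (f c * y x))
    have h1 : (π (f c'))⁻¹ * π (f c * y x) ∈ H := QuotientGroup.eq.1 (hf1 c')
    obtain ⟨z, hz⟩ := ψsurj _ h1
    obtain ⟨v, rfl⟩ := hDsurj z
    rw [← hsg] at hz
    refine ⟨f c * y x * (f c')⁻¹ * (sg s v)⁻¹, v, c', ?_, by group⟩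
    rw [MonoidHom.mem_ker]
    rw [map_mul, map_inv π (sg s v), hz, map_mul, map_inv, hQ _ (π (f c'))⁻¹, mul_inv_cancel]
  choose am vv nx ham hnx using htr
  let J := ((Q ⧸ H) × Y) ⊕ (Fin (k + k) × Fin (k + k))
  let a : J → M := Sum.elim (fun p => am p.1 p.2) (fun p => ⁅s p.1, s p.2⁆)
  let ic : Fin (k + k) → Fin (k + k) → J := fun i j => Sum.inr (i, j)
  have hic : ∀ i j, a (ic i j) = ⁅s i, s j⁆ := fun i j => rfl
  have hak : ∀ j, a j ∈ π.ker := by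
    rintro (p | p)
    · exact ham _ _
    · simp only [a, Sum.elim_inr, MonoidHom.mem_ker, map_commutatorElement]
      rw [commutatorElement_eq_one_iff_mul_comm]; exact hQ _ _
  choose K1 hK1 using fun i j => al_exists (hA (a i) (a j) (hak i) (hak j))
  have hstk : ∀ t j, ⁅s t, a j⁆ ∈ π.ker := by
    intro t j
    rw [MonoidHom.mem_ker, map_commutatorElement, commutatorElement_eq_one_iff_mul_comm]
    exact hQ _ _
  choose K2 hK2 using fun i t j => al_exists (hA (a i) ⁅s t, a j⁆ (hak i) (hstk t j))
  obtain ⟨B1, hB1⟩ := (Set.finite_range fun p : J × J => K1 p.1 p.2).bddAbove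
  obtain ⟨B2, hB2⟩ := (Set.finite_range fun p : J × Fin (k + k) × J => K2 p.1 p.2.1 p.2.2).bddAbove
  have h1 : ∀ i j, AreaLe R ⁅a i, a j⁆ (B1 + B2) := fun i j =>
    al_mono (hK1 i j) ((hB1 ⟨(i, j), rfl⟩).trans (by omega))
  have h2 : ∀ i t j, AreaLe R ⁅a i, ⁅s t, a j⁆⁆ (B1 + B2) := fun i t j =>
    al_mono (hK2 i t j) ((hB2 ⟨(i, t, j), rfl⟩).trans (by omega))
  obtain ⟨C, hC, harea⟩ := abs_area s a hmet h1 h2 hic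
  obtain ⟨V, hV, hV0⟩ : ∃ V, (∀ c x, (vv c x).degree ≤ V) ∧ (k = 0 → V = 0) := by
    by_cases hk : k = 0
    · refine ⟨0, fun c x => ?_, fun _ => rfl⟩
      have : vv c x = 0 := by
        ext i; have := i.2; omega
      simp [this]
    · obtain ⟨V, hV⟩ := (Set.finite_range fun p : (Q ⧸ H) × Y => (vv p.1 p.2).degree).bddAbove
      exact ⟨V, fun c x => hV ⟨(c, x), rfl⟩, fun h => absurd h hk⟩
  refine ⟨C, V, hC, hV0, fun w hw => ?_⟩
  obtain ⟨l, e, c, w1, w2, w3, w4⟩ := word_nf s a hic f y (QuotientGroup.mk 1) (hf2 _ rfl) V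
    (fun c x => ⟨Sum.inl (c, x), vv c x, nx c x, hnx c x, hV c x⟩) w
  have hltk : ∀ i, lt s a i ∈ π.ker := fun i =>
    (inferInstance : π.ker.Normal).conj_mem _ (hak _) _
  have hevk : ev (lt s a) l ∈ π.ker := by
    refine Subgroup.list_prod_mem _ fun x hx => ?_
    obtain ⟨p, _, rfl⟩ := List.mem_map.1 hx
    unfold cl
    cases p.2
    · exact inv_mem (hltk _)
    · exact hltk _
  have hwk := hN hw
  rw [w1, MonoidHom.mem_ker, map_mul, map_mul, MonoidHom.mem_ker.1 hevk, one_mul] at hwk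
  have hc : f c = 1 := by
    apply hf2
    rw [← hf1 c, QuotientGroup.eq, mul_one, ← eq_inv_of_mul_eq_one_left hwk, hsg]
    exact ψH _
  rw [hc, map_one, mul_one, hsg] at hwk
  have hD0 := ψinj _ hwk
  obtain ⟨l', v1, v2, v3⟩ := close_nf s a hsinv hic _ e le_rfl (fun i => by
    have := congrFun hD0 i
    simp only [Df, Pi.zero_apply] at this
    omega)
  have hweq : (w.map y).prod = ev (lt s a) (l ++ l') := by
    rw [w1, hc, mul_one, v3, ev_append]
  rw [hweq] at hw ⊢
  refine al_mono (harea (V * w.length) (l ++ l') ?_ hw) ?_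
  · intro p hp
    rcases List.mem_append.1 hp with hp | hp
    · exact w3 p hp
    · exact (v1 p hp).trans w2
  · have : (l ++ l').length ≤ w.length + 3 * (V * w.length) ^ 2 := by
      rw [List.length_append]
      have h3 : l'.length ≤ 2 * (V * w.length) ^ 2 := v2.trans (by gcongr)
      have h4 : w.length * (V * (V * w.length)) = (V * w.length) ^ 2 := by ring
      omega
    gcongr

end main

theorem arith0 (δ : ℕ → ℕ) (C : ℕ) (hC : 0 < C) (h : ∀ n, δ n ≤ C * n ^ 2 * C) :
    Dominates δ fun n => n ^ 2 := by
  refine ⟨C, hC, fun n => (h n).trans ?_⟩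
  have : C * n ^ 2 * C ≤ C * (C * n) ^ 2 := by
    have : C * (C * n) ^ 2 = C * n ^ 2 * C * C := by ring
    rw [this]; exact Nat.le_mul_of_pos_right _ hC
  dsimp only
  omega

theorem arith1 (δ : ℕ → ℕ) (C V k : ℕ) (hC : 0 < C) (hk : 0 < k)
    (h : ∀ n, δ n ≤ C * (n + 3 * (V * n) ^ 2) ^ 2 *
        (V * n + 1) ^ 3 * C ^ ((V * n + 1) ^ (k + k))) :
    Dominates δ fun n => 2 ^ n ^ (2 * k) := by
  -- everything is at most `2 ^ ((c n) ^ (2 k))`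
  set W := V + 4 with hW
  set U := 16 * (C + 1) * W with hU
  have key : ∀ n, 0 < n → δ n ≤ 2 ^ (U * n) ^ (2 * k) := by
    intro n hn
    refine (h n).trans ?_
    have hWn : 4 ≤ W * n := by nlinarith
    have b1 : V * n + 1 ≤ W * n := by rw [hW]; nlinarith
    have b2 : n + 3 * (V * n) ^ 2 ≤ (W * n) ^ 3 := by
      have : n ≤ (W * n) ^ 2 := by nlinarith
      have : (V * n) ^ 2 ≤ (W * n) ^ 2 := by gcongr; omega
      have : (W * n) ^ 3 = (W * n) ^ 2 * (W * n) := by ring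
      nlinarith
    have hlt : ∀ x : ℕ, x ≤ 2 ^ x := fun x => Nat.lt_two_pow_self.le
    have e2 : k + k = 2 * k := by ring
    set T := (W * n) ^ (2 * k) with hT
    have hTW : W * n ≤ T := Nat.le_self_pow (by omega) _
    calc C * (n + 3 * (V * n) ^ 2) ^ 2 * (V * n + 1) ^ 3 * C ^ ((V * n + 1) ^ (k + k))
        ≤ C * ((W * n) ^ 3) ^ 2 * (W * n) ^ 3 * C ^ ((W * n) ^ (2 * k)) := by
          rw [e2]; gcongr
      _ = C * (W * n) ^ 9 * C ^ T := by ring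
      _ ≤ 2 ^ C * (2 ^ (W * n)) ^ 9 * (2 ^ C) ^ T := by gcongr <;> exact hlt _
      _ = 2 ^ (C + W * n * 9 + C * T) := by rw [← pow_mul, ← pow_mul, ← pow_add, ← pow_add]
      _ ≤ 2 ^ (U * n) ^ (2 * k) := by
          apply Nat.pow_le_pow_right (by norm_num)
          have hUn : U * n = (16 * (C + 1)) * (W * n) := by rw [hU]; ring
          rw [hUn, mul_pow]
          have : 16 * (C + 1) ≤ (16 * (C + 1)) ^ (2 * k) := Nat.le_self_pow (by omega) _
          calc C + W * n * 9 + C * T ≤ C * T + T * 9 + C * T := by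
                have : C ≤ C * T := Nat.le_mul_of_pos_right _ (by omega)
                omega
            _ ≤ 16 * (C + 1) * T := by nlinarith
            _ ≤ _ := Nat.mul_le_mul_right _ this
  refine ⟨U + δ 0 + 1, by omega, fun n => ?_⟩
  dsimp only
  rcases Nat.eq_zero_or_pos n with rfl | hn
  · omega
  · refine (key n hn).trans ?_
    have : 2 ^ (U * n) ^ (2 * k) ≤ 2 ^ ((U + δ 0 + 1) * n) ^ (2 * k) := by
      apply Nat.pow_le_pow_right (by norm_num)
      gcongr; omega
    have h2 : 2 ^ ((U + δ 0 + 1) * n) ^ (2 * k) ≤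
        (U + δ 0 + 1) * 2 ^ ((U + δ 0 + 1) * n) ^ (2 * k) :=
      Nat.le_mul_of_pos_left _ (by omega)
    omega

theorem met_fm (X : Type) : ∀ p q : FreeMetabelian X, p ∈ commutator (FreeMetabelian X) →
    q ∈ commutator (FreeMetabelian X) → p * q = q * p := by
  intro p q hp hq
  have hm : Function.Surjective (QuotientGroup.mk' (derivedSeries (FreeGroup X) 2)) :=
    QuotientGroup.mk'_surjective _
  have h1 := map_derivedSeries_eq hm 2
  rw [QuotientGroup.map_mk'_self] at h1
  rw [← derivedSeries_one] at hp hq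
  have := Subgroup.commutator_mem_commutator hp hq
  rw [← derivedSeries_succ, ← h1, Subgroup.mem_bot, commutatorElement_eq_one_iff_mul_comm] at this
  exact this

theorem word_fm {X : Type} (w : FreeMetabelian X) (n : ℕ) (h : mNormLe w n) :
    ∃ l : List (X × Bool), l.length ≤ n ∧ (l.map fun p : X × Bool =>
      (QuotientGroup.mk' (derivedSeries (FreeGroup X) 2) (FreeGroup.mk [p]))).prod = w := by
  classical
  obtain ⟨v, rfl, hv⟩ := h
  have hv' : v.toWord.length ≤ n := by
    unfold freeNorm at hv
    convert hv using 3
  refine ⟨v.toWord, hv', ?_⟩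
  have : ∀ l : List (X × Bool), (l.map fun p : X × Bool =>
      (QuotientGroup.mk' (derivedSeries (FreeGroup X) 2) (FreeGroup.mk [p]))).prod =
      QuotientGroup.mk' (derivedSeries (FreeGroup X) 2) (FreeGroup.mk l) := by
    intro l
    induction l with
    | nil => rw [List.map_nil, List.prod_nil, ← FreeGroup.one_eq_mk, map_one]
    | cons p l ih =>
      rw [List.map_cons, List.prod_cons, ih, ← map_mul, FreeGroup.mul_mk]; rfl
  rw [this, FreeGroup.mk_toWord]

end RD

/-- Upper bound for the relative Dehn function (in the variety of
metabelian groups) of a finitely generated metabelian group in terms of the minimal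
torsion-free rank `k`. -/
theorem relative_dehn_upper_bound_metabelian {X : Type} [Finite X]
    (R : Set (FreeMetabelian X)) (hR : R.Finite) (δ : ℕ → ℕ) (hδ : IsRelDehnFunctionOf R δ)
    (k : ℕ) (hk : IsLeast (abelianRankSet (FreeMetabelian X ⧸ Subgroup.normalClosure R)) k) :
    (k = 0 → Dominates δ fun n => n ^ 2) ∧ (0 < k → Dominates δ fun n => 2 ^ n ^ (2 * k)) := by
  obtain ⟨A, hAn, hAc, hQ, H, hH, ⟨φ⟩⟩ := hk.1
  let π : FreeMetabelian X →* (FreeMetabelian X ⧸ Subgroup.normalClosure R) ⧸ A :=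
    (QuotientGroup.mk' A).comp (QuotientGroup.mk' (Subgroup.normalClosure R))
  have hπ : Function.Surjective π :=
    (QuotientGroup.mk'_surjective A).comp (QuotientGroup.mk'_surjective _)
  obtain ⟨C, V, hC, hV0, hw⟩ := RD.main_area (R := R) (RD.met_fm X) hQ π hπ
    (by
      intro x hx
      rw [MonoidHom.mem_ker]
      have : QuotientGroup.mk' (Subgroup.normalClosure R) x = 1 :=
        (QuotientGroup.eq_one_iff x).2 hx
      simp only [π, MonoidHom.comp_apply, this, map_one])
    (by
      intro p q hp hq
      have hp' : QuotientGroup.mk' (Subgroup.normalClosure R) p ∈ A :=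
        (QuotientGroup.eq_one_iff _).1 hp
      have hq' : QuotientGroup.mk' (Subgroup.normalClosure R) q ∈ A :=
        (QuotientGroup.eq_one_iff _).1 hq
      have := hAc _ _ hp' hq'
      rw [← commutatorElement_eq_one_iff_mul_comm, ← map_commutatorElement] at this
      exact (QuotientGroup.eq_one_iff _).1 this)
    H hH φ (fun p : X × Bool =>
      QuotientGroup.mk' (derivedSeries (FreeGroup X) 2) (FreeGroup.mk [p]))
  have hb : ∀ n, δ n ≤ C * (n + 3 * (V * n) ^ 2) ^ 2 *
        (V * n + 1) ^ 3 * C ^ ((V * n + 1) ^ (k + k)) := by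
    intro n
    apply (hδ n).2
    intro w hwN hn
    obtain ⟨l, hl, rfl⟩ := RD.word_fm w n hn
    refine RD.al_mono (hw l hwN) ?_
    gcongr
  refine ⟨fun h0 => ?_, fun hpos => RD.arith1 δ C V k hC hpos hb⟩
  refine RD.arith0 δ C hC fun n => ?_
  have := hb n
  rw [hV0 h0, h0] at this
  simpa using this
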